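/- Let ψ : ℝ → ℝ be twice differentiable, not identically zero, with ψ''(x) = Q(x)ψ(x) for all x ∈ ℝ, where Q(x) := (p + Bx + A(x))² − ε. Assume that the function x ↦ (p + Bx + A(x))ψ(x)² is Lebesgue integrable on ℝ and that ψ'(x)² − Q(x)ψ(x)² → 0 as x → ±∞. Assume further that b(x) ≥ 0 for all x, that b(x₁) > 0 for some x₁ ∈ (−a, a), and that p + Bx + A(x) > 0 for all x ∈ [−a, a]. Then ∫_ℝ (p + Bx + A(x))ψ(x)² dx < 0. -/

import Mathlib

open MeasureTheory Filter

/-!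
Write `P x = p + B x + A x`, so that `Q = P² - ε` and `Q' = 2 P (B + b)`. Along a solution of
`ψ'' = Q ψ` the energy `ψ'² - Q ψ²` has derivative `-Q' ψ² = -2 B P ψ² - 2 b P ψ²`, and it vanishes
at both ends of the line. Since `b P ψ² ≥ 0`, the energy plus the primitive of `2 B P ψ²` is
antitone, and comparing its limits at `±∞` gives `2 B ∫ P ψ² ≤ 0`. Equality would make `b P ψ²`
vanish identically, hence `ψ` vanish near a point where `b > 0`, and then everywhere by uniqueness
for the Cauchy problem.
-/

open scoped Topology

theorem lt_of_hasDerivAt_nonpos_of_tendsto {F F' : ℝ → ℝ} {l m x₀ : ℝ}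
    (hF : ∀ x, HasDerivAt F (F' x) x) (hF' : ∀ x, F' x ≤ 0) (hx₀ : F' x₀ < 0)
    (hbot : Tendsto F atBot (𝓝 l)) (htop : Tendsto F atTop (𝓝 m)) : m < l := by
  have hanti : Antitone F := antitone_of_hasDerivAt_nonpos hF hF'
  refine ((hanti.le_of_tendsto htop x₀).trans (hanti.ge_of_tendsto hbot x₀)).lt_of_ne ?_
  rintro rfl
  have hconst : F = fun _ ↦ m := funext fun x ↦
    le_antisymm (hanti.ge_of_tendsto hbot x) (hanti.le_of_tendsto htop x)
  have hzero : HasDerivAt F 0 x₀ := hconst ▸ hasDerivAt_const x₀ m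
  exact hx₀.ne ((hF x₀).unique hzero)

theorem sub_lt_integral_of_hasDerivAt_le_of_tendsto {f f' φ : ℝ → ℝ} {l m x₀ : ℝ}
    (hf : ∀ x, HasDerivAt f (f' x) x) (hφc : Continuous φ) (hφ : Integrable φ)
    (hle : ∀ x, f' x ≤ φ x) (hlt : f' x₀ < φ x₀)
    (hbot : Tendsto f atBot (𝓝 l)) (htop : Tendsto f atTop (𝓝 m)) : m - l < ∫ x, φ x := by
  have hderiv : ∀ x, HasDerivAt (fun x ↦ f x - ∫ t in (0 : ℝ)..x, φ t) (f' x - φ x) x := fun x ↦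
    (hf x).sub (hφc.integral_hasStrictDerivAt 0 x).hasDerivAt
  have hprim_top : Tendsto (fun x ↦ ∫ t in (0 : ℝ)..x, φ t) atTop (𝓝 (∫ t in Set.Ioi 0, φ t)) :=
    intervalIntegral_tendsto_integral_Ioi 0 hφ.integrableOn tendsto_id
  have hprim_bot :
      Tendsto (fun x ↦ ∫ t in (0 : ℝ)..x, φ t) atBot (𝓝 (-∫ t in Set.Iic 0, φ t)) := by
    simpa only [intervalIntegral.integral_symm _ (0 : ℝ), neg_neg, id] using
      (intervalIntegral_tendsto_integral_Iic 0 hφ.integrableOn tendsto_id).neg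
  have hlim := lt_of_hasDerivAt_nonpos_of_tendsto hderiv (fun x ↦ sub_nonpos.2 (hle x))
    (sub_neg.2 hlt) (hbot.sub hprim_bot) (htop.sub hprim_top)
  have hsplit := intervalIntegral.integral_Iic_add_Ioi (b := (0 : ℝ)) hφ.integrableOn
    hφ.integrableOn
  linarith

section LinearODE

variable {E : Type*} [NormedAddCommGroup E] [NormedSpace ℝ E]

theorem eq_zero_of_hasDerivAt_clm_apply {L : ℝ → E →L[ℝ] E} (hL : Continuous L) {y : ℝ → E}
    (hy : ∀ t, HasDerivAt y (L t (y t)) t) {t₀ : ℝ} (h₀ : y t₀ = 0) : y = 0 := by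
  funext t
  obtain ⟨r, hr⟩ : ∃ r, max |t₀| |t| < r := exists_gt _
  obtain ⟨ht₀, ht⟩ := max_lt_iff.1 hr
  obtain ⟨C, hC⟩ :=
    (isCompact_Icc (a := -r) (b := r)).exists_bound_of_continuousOn hL.continuousOn
  have hlip : ∀ s ∈ Set.Ioo (-r) r, LipschitzOnWith C.toNNReal (L s) Set.univ := fun s hs ↦
    ((L s).lipschitz.weaken <| NNReal.le_toNNReal_of_coe_le <|
      hC s (Set.Ioo_subset_Icc_self hs)).lipschitzOnWith
  have hzero : ∀ s, HasDerivAt (0 : ℝ → E) (L s ((0 : ℝ → E) s)) s := fun s ↦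
    (hasDerivAt_const s (0 : E)).congr_deriv (map_zero (L s)).symm
  exact ODE_solution_unique_of_mem_Ioo hlip (abs_lt.1 ht₀)
    (fun s _ ↦ ⟨hy s, Set.mem_univ _⟩) (fun s _ ↦ ⟨hzero s, Set.mem_univ _⟩) h₀ (abs_lt.1 ht)

variable {Q : ℝ → ℝ} {u u' : ℝ → E}

theorem eq_zero_of_hasDerivAt_smul (hQ : Continuous Q) (hu : ∀ x, HasDerivAt u (u' x) x)
    (hu' : ∀ x, HasDerivAt u' (Q x • u x) x) {x₀ : ℝ} (h₀ : u x₀ = 0) (h₀' : u' x₀ = 0) :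
    u = 0 := by
  let L : ℝ → E × E →L[ℝ] E × E := fun x ↦
    (ContinuousLinearMap.snd ℝ E E).prod (Q x • ContinuousLinearMap.fst ℝ E E)
  have hL : Continuous L :=
    (ContinuousLinearMap.prodₗᵢ (𝕜 := ℝ) (E := E × E) (F := E) (G := E) ℝ).continuous.comp
      (continuous_const.prodMk (hQ.smul continuous_const))
  have hy : (fun x ↦ (u x, u' x)) = 0 :=
    eq_zero_of_hasDerivAt_clm_apply hL (fun x ↦ (hu x).prodMk (hu' x)) (Prod.ext h₀ h₀')
  exact funext fun x ↦ congrArg Prod.fst (congrFun hy x)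

theorem eq_zero_of_hasDerivAt_smul_of_eventuallyEq_zero (hQ : Continuous Q)
    (hu : ∀ x, HasDerivAt u (u' x) x) (hu' : ∀ x, HasDerivAt u' (Q x • u x) x) {x₀ : ℝ}
    (h₀ : u =ᶠ[𝓝 x₀] 0) : u = 0 := by
  have hzero : HasDerivAt u 0 x₀ := (hasDerivAt_const x₀ (0 : E)).congr_of_eventuallyEq h₀
  exact eq_zero_of_hasDerivAt_smul hQ hu hu' h₀.eq_of_nhds ((hu x₀).unique hzero)

end LinearODE

section Schrodinger

variable {Q Q' ψ ψ' : ℝ → ℝ}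

theorem hasDerivAt_sq_sub_mul_sq (hQ : ∀ x, HasDerivAt Q (Q' x) x)
    (hψ : ∀ x, HasDerivAt ψ (ψ' x) x) (hψ' : ∀ x, HasDerivAt ψ' (Q x * ψ x) x) (x : ℝ) :
    HasDerivAt (fun x ↦ ψ' x ^ 2 - Q x * ψ x ^ 2) (-(Q' x * ψ x ^ 2)) x :=
  (((hψ' x).fun_pow 2).fun_sub ((hQ x).fun_mul ((hψ x).fun_pow 2))).congr_deriv
    (by push_cast; ring)

theorem integral_mul_sq_neg_of_le_deriv_potential {W : ℝ → ℝ} {x₀ : ℝ} (hW : Continuous W)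
    (hQ : ∀ x, HasDerivAt Q (Q' x) x) (hψ : ∀ x, HasDerivAt ψ (ψ' x) x)
    (hψ' : ∀ x, HasDerivAt ψ' (Q x * ψ x) x) (hψ_ne : ψ ≠ 0)
    (hint : Integrable fun x ↦ W x * ψ x ^ 2)
    (htop : Tendsto (fun x ↦ ψ' x ^ 2 - Q x * ψ x ^ 2) atTop (𝓝 0))
    (hbot : Tendsto (fun x ↦ ψ' x ^ 2 - Q x * ψ x ^ 2) atBot (𝓝 0))
    (hle : ∀ x, W x ≤ Q' x) (hlt : ∀ᶠ x in 𝓝 x₀, W x < Q' x) :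
    ∫ x, W x * ψ x ^ 2 < 0 := by
  have hQc : Continuous Q := continuous_iff_continuousAt.2 fun x ↦ (hQ x).continuousAt
  have hψc : Continuous ψ := continuous_iff_continuousAt.2 fun x ↦ (hψ x).continuousAt
  obtain ⟨x, hψx, hx⟩ : ∃ x, ψ x ≠ 0 ∧ W x < Q' x := by
    have hfreq : ∃ᶠ x in 𝓝 x₀, ψ x ≠ 0 := fun h ↦
      hψ_ne (eq_zero_of_hasDerivAt_smul_of_eventuallyEq_zero hQc hψ hψ' (h.mono fun _ ↦ not_not.1))
    exact (hfreq.and_eventually hlt).exists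
  have hflux := sub_lt_integral_of_hasDerivAt_le_of_tendsto (hasDerivAt_sq_sub_mul_sq hQ hψ hψ')
    (φ := fun x ↦ -(W x * ψ x ^ 2)) (hW.mul (hψc.pow 2)).neg hint.neg
    (fun x ↦ neg_le_neg (mul_le_mul_of_nonneg_right (hle x) (sq_nonneg (ψ x))))
    (neg_lt_neg (mul_lt_mul_of_pos_right hx (sq_pos_of_ne_zero hψx))) hbot htop
  simpa only [sub_zero, integral_neg, neg_pos] using hflux

end Schrodinger

theorem hasDerivAt_add_mul_add_integral {b : ℝ → ℝ} (hb : Continuous b) (p B c x : ℝ) :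
    HasDerivAt (fun x ↦ p + B * x + ∫ t in c..x, b t) (B + b x) x := by
  simpa only [mul_one, id] using (((hasDerivAt_id x).const_mul B).const_add p).fun_add
    (hb.integral_hasStrictDerivAt c x).hasDerivAt

theorem stmt_8_general {B : ℝ} (hB : 0 < B) {b : ℝ → ℝ} (hb_cont : Continuous b)
    {A : ℝ → ℝ} (hA : ∀ x, A x = ∫ t in (0 : ℝ)..x, b t)
    {p ε : ℝ} {Q : ℝ → ℝ} (hQ : ∀ x, Q x = (p + B * x + A x) ^ 2 - ε)
    {ψ : ℝ → ℝ} (hψ : Differentiable ℝ ψ) (hψ' : Differentiable ℝ (deriv ψ)) (hψ_ne : ψ ≠ 0)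
    (hode : ∀ x, deriv (deriv ψ) x = Q x * ψ x)
    (hint : Integrable fun x ↦ (p + B * x + A x) * ψ x ^ 2)
    (htop : Tendsto (fun x ↦ deriv ψ x ^ 2 - Q x * ψ x ^ 2) atTop (𝓝 0))
    (hbot : Tendsto (fun x ↦ deriv ψ x ^ 2 - Q x * ψ x ^ 2) atBot (𝓝 0))
    (hb_nonneg : ∀ x, 0 ≤ b x) (hb_pos : ∃ x, 0 < b x)
    (hmom : ∀ x ∈ Function.support b, 0 < p + B * x + A x) :
    ∫ x, (p + B * x + A x) * ψ x ^ 2 < 0 := by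
  obtain ⟨x₀, hx₀⟩ := hb_pos
  set P : ℝ → ℝ := fun x ↦ p + B * x + A x with hP_def
  have hP : ∀ x, HasDerivAt P (B + b x) x := fun x ↦ by
    simpa only [hP_def, hA] using hasDerivAt_add_mul_add_integral hb_cont p B 0 x
  have hPc : Continuous P := continuous_iff_continuousAt.2 fun x ↦ (hP x).continuousAt
  have hQ' : ∀ x, HasDerivAt Q (2 * B * P x + 2 * (b x * P x)) x := fun x ↦ by
    rw [funext hQ]
    exact (((hP x).fun_pow 2).sub_const ε).congr_deriv (by push_cast; ring)
  have hbP : ∀ x, 0 ≤ b x * P x := fun x ↦ by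
    rcases eq_or_ne (b x) 0 with h | h
    · rw [h, zero_mul]
    · exact mul_nonneg (hb_nonneg x) (hmom x h).le
  have hbP_pos : ∀ᶠ x in 𝓝 x₀, 0 < b x * P x :=
    (hb_cont.continuousAt.eventually (lt_mem_nhds hx₀)).mono fun x hx ↦
      mul_pos hx (hmom x hx.ne')
  have hscaled : ∫ x, 2 * B * P x * ψ x ^ 2 < 0 :=
    integral_mul_sq_neg_of_le_deriv_potential (continuous_const.mul hPc) hQ'
      (fun x ↦ (hψ x).hasDerivAt) (fun x ↦ hode x ▸ (hψ' x).hasDerivAt) hψ_ne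
      (by simpa only [mul_assoc] using hint.const_mul (2 * B)) htop hbot
      (fun x ↦ by linarith [hbP x]) (hbP_pos.mono fun x hx ↦ by linarith)
  simp only [mul_assoc (2 * B), integral_const_mul] at hscaled
  exact (pos_iff_neg_of_mul_neg hscaled).1 (by positivity)

/-- If moreover ψ is not identically zero, b ≥ 0 with b(x₁) > 0 for some
x₁ ∈ (−a, a), and p + Bx + A(x) > 0 on [−a, a], then
∫ℝ (p + Bx + A(x))ψ(x)² dx < 0. -/
theorem stmt_8 (B a : ℝ) (hB : 0 < B) (ha : 0 < a)
    (b : ℝ → ℝ) (hb_cont : Continuous b) (hb_bd : ∃ M : ℝ, ∀ x : ℝ, |b x| ≤ M)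
    (hb_supp : Function.support b ⊆ Set.Icc (-a) a)
    (A : ℝ → ℝ) (hA : ∀ x : ℝ, A x = ∫ t in (0 : ℝ)..x, b t)
    (p ε : ℝ) (Q : ℝ → ℝ) (hQ : ∀ x : ℝ, Q x = (p + B * x + A x) ^ 2 - ε)
    (ψ : ℝ → ℝ) (hψ : Differentiable ℝ ψ) (hψ' : Differentiable ℝ (deriv ψ))
    (hψ_ne : ψ ≠ 0)
    (hode : ∀ x : ℝ, deriv (deriv ψ) x = Q x * ψ x)
    (hint : Integrable (fun x : ℝ => (p + B * x + A x) * ψ x ^ 2) volume)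
    (htop : Tendsto (fun x : ℝ => (deriv ψ x) ^ 2 - Q x * ψ x ^ 2) atTop (nhds 0))
    (hbot : Tendsto (fun x : ℝ => (deriv ψ x) ^ 2 - Q x * ψ x ^ 2) atBot (nhds 0))
    (hb_nonneg : ∀ x : ℝ, 0 ≤ b x)
    (hb_pos : ∃ x₁ ∈ Set.Ioo (-a) a, 0 < b x₁)
    (hmom : ∀ x ∈ Set.Icc (-a) a, 0 < p + B * x + A x) :
    (∫ x : ℝ, (p + B * x + A x) * ψ x ^ 2) < 0 :=
  let ⟨x₁, _, hbx₁⟩ := hb_pos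
  stmt_8_general hB hb_cont hA hQ hψ hψ' hψ_ne hode hint htop hbot hb_nonneg ⟨x₁, hbx₁⟩
    fun x hx ↦ hmom x (hb_supp hx)
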